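/- arXiv:1803.08839 — 3 statements merged into one kernel-verified Lean document; each statement's English description precedes it below -/
import Mathlib

section
/- Let G be a triangle-free simple graph on 6 vertices with at least 8 edges that contains a perfect matching (in fact, whose vertex set is covered by three disjoint edges). Then G is bipartite, and G is isomorphic to K_{3,3} or to K_{3,3} minus one edge. -/
open SimpleGraph

/-- `K_{3,3}` minus one edge. -/
noncomputable def K33minus : SimpleGraph (Fin 3 ⊕ Fin 3) :=
  (completeBipartiteGraph (Fin 3) (Fin 3)).deleteEdges {s(Sum.inl 0, Sum.inr 0)}

/-!
By Cauchy–Schwarz on the degree sequence, some edge `uv` of a graph with `n` vertices and `m`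
edges satisfies `deg u + deg v ≥ 4m / n`. If `4m > n(n - 1)`, this sum is at least `n`; in a
triangle-free graph the neighborhoods of `u` and `v` are disjoint independent sets, so they
partition the vertices and the graph is bipartite. A perfect matching pairs the two sides, so for
`n = 2k` the graph is a spanning subgraph of `K_{k,k}`. With at least `k² - 1` edges it misses at
most one edge of `K_{k,k}`, and `K_{k,k}` is edge-transitive. The edge condition
`4(k² - 1) > 2k(2k - 1)` holds for `k ≥ 3`.
-/

section DartSums

variable {V R : Type*} [Fintype V] [AddCommMonoid R] (G : SimpleGraph V) [DecidableRel G.Adj]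

theorem sum_dart_fst (f : V → R) : ∑ d : G.Dart, f d.fst = ∑ v, G.degree v • f v := by
  classical
  rw [← Finset.sum_fiberwise Finset.univ (fun d : G.Dart => d.fst)]
  refine Finset.sum_congr rfl fun v _ => ?_
  rw [← G.dart_fst_fiber_card_eq_degree]
  exact Finset.sum_eq_card_nsmul fun d hd => congrArg f (Finset.mem_filter.mp hd).2

theorem sum_dart_snd (f : V → R) : ∑ d : G.Dart, f d.snd = ∑ v, G.degree v • f v :=
  (Equiv.sum_comp (Dart.symm_involutive (G := G)).toPerm fun d => f d.fst).trans (sum_dart_fst G f)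

end DartSums

section Bipartition

variable {V : Type*} {G : SimpleGraph V}

theorem exists_adj_four_mul_card_edgeFinset_le [Fintype V] [DecidableRel G.Adj] (hG : G ≠ ⊥) :
    ∃ u v, G.Adj u v ∧ 4 * G.edgeFinset.card ≤ Fintype.card V * (G.degree u + G.degree v) := by
  obtain ⟨a, b, hab⟩ := ne_bot_iff_exists_adj.mp hG
  suffices h : ∑ _d : G.Dart, 4 * G.edgeFinset.card ≤
      ∑ d : G.Dart, Fintype.card V * (G.degree d.fst + G.degree d.snd) by
    obtain ⟨d, -, hd⟩ := Finset.exists_le_of_sum_le ⟨⟨(a, b), hab⟩, Finset.mem_univ _⟩ h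
    exact ⟨d.fst, d.snd, d.adj, hd⟩
  calc ∑ _d : G.Dart, 4 * G.edgeFinset.card
      = 2 * (∑ v, G.degree v) ^ 2 := by
        rw [Finset.sum_const, Finset.card_univ, G.dart_card_eq_twice_card_edges,
          G.sum_degrees_eq_twice_card_edges, smul_eq_mul]
        ring
    _ ≤ 2 * (Fintype.card V * ∑ v, G.degree v ^ 2) :=
        Nat.mul_le_mul_left 2 sq_sum_le_card_mul_sum_sq
    _ = ∑ d : G.Dart, Fintype.card V * (G.degree d.fst + G.degree d.snd) := by
        rw [← Finset.mul_sum, Finset.sum_add_distrib, sum_dart_fst G (G.degree ·),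
          sum_dart_snd G (G.degree ·)]
        simp only [smul_eq_mul, ← sq]
        ring

theorem disjoint_neighborSet_of_cliqueFree_three (htf : G.CliqueFree 3) {u v : V}
    (huv : G.Adj u v) : Disjoint (G.neighborSet u) (G.neighborSet v) :=
  Set.disjoint_left.mpr fun x hux hvx =>
    isIndepSet_neighborSet_of_triangleFree _ htf x hux.symm hvx.symm huv.ne huv

theorem isCompl_neighborSet_of_card_le_degree_add_degree [Fintype V] [DecidableRel G.Adj]
    (htf : G.CliqueFree 3) {u v : V} (huv : G.Adj u v)
    (hcard : Fintype.card V ≤ G.degree u + G.degree v) :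
    IsCompl (G.neighborSet u) (G.neighborSet v) := by
  classical
  have hdisj := disjoint_neighborSet_of_cliqueFree_three htf huv
  refine ⟨hdisj, codisjoint_iff.mpr ?_⟩
  have huniv : G.neighborFinset u ∪ G.neighborFinset v = Finset.univ := by
    refine Finset.eq_univ_of_card _ (le_antisymm (Finset.card_le_univ _) ?_)
    exact hcard.trans_eq (Finset.card_union_of_disjoint (Set.disjoint_toFinset.mpr hdisj)).symm
  simpa using congrArg (fun s : Finset V => (s : Set V)) huniv

theorem isBipartiteWith_of_isCompl_of_isIndepSet {s t : Set V} (hst : IsCompl s t)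
    (hs : G.IsIndepSet s) (ht : G.IsIndepSet t) : G.IsBipartiteWith s t where
  disjoint := hst.disjoint
  mem_of_adj v w hvw := by
    have hs_or_ht (x : V) : x ∈ s ∨ x ∈ t := hst.sup_eq_top.ge (Set.mem_univ x)
    rcases hs_or_ht v with hv | hv <;> rcases hs_or_ht w with hw | hw
    · exact (hs hv hw hvw.ne hvw).elim
    · exact .inl ⟨hv, hw⟩
    · exact .inr ⟨hv, hw⟩
    · exact (ht hv hw hvw.ne hvw).elim

theorem isBipartite_of_cliqueFree_three_of_lt_four_mul_card_edgeFinset [Fintype V]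
    [DecidableRel G.Adj] (htf : G.CliqueFree 3)
    (hE : Fintype.card V * (Fintype.card V - 1) < 4 * G.edgeFinset.card) : G.IsBipartite := by
  have hG : G ≠ ⊥ := by
    rintro rfl
    exact hE.ne_bot (by simp)
  obtain ⟨u, v, huv, hle⟩ := exists_adj_four_mul_card_edgeFinset_le hG
  have hdeg : Fintype.card V - 1 < G.degree u + G.degree v :=
    Nat.lt_of_mul_lt_mul_left (hE.trans_le hle)
  have hcompl := isCompl_neighborSet_of_card_le_degree_add_degree htf huv (by omega)
  exact (isBipartiteWith_of_isCompl_of_isIndepSet hcompl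
    (isIndepSet_neighborSet_of_triangleFree _ htf u)
    (isIndepSet_neighborSet_of_triangleFree _ htf v)).isBipartite

end Bipartition

section PerfectMatching

variable {V : Type*} {G : SimpleGraph V} {M : G.Subgraph} {s t : Set V}

theorem isCompl_of_isBipartiteWith_of_isPerfectMatching (hM : M.IsPerfectMatching)
    (hst : G.IsBipartiteWith s t) : IsCompl s t := by
  refine ⟨hst.disjoint, codisjoint_iff.mpr (Set.eq_univ_of_forall fun v => ?_)⟩
  obtain ⟨w, hvw, -⟩ := Subgraph.isPerfectMatching_iff.mp hM v
  exact isBipartiteWith_support_subset hst ⟨w, hvw.adj_sub⟩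

theorem nonempty_equiv_of_isBipartiteWith_of_isPerfectMatching (hM : M.IsPerfectMatching)
    (hst : G.IsBipartiteWith s t) : Nonempty (s ≃ t) := by
  choose m hm hm_unique using Subgraph.isPerfectMatching_iff.mp hM
  have m_involutive (v : V) : m (m v) = v := (hm_unique (m v) v (hm v).symm).symm
  exact ⟨{
    toFun v := ⟨m v, hst.mem_of_mem_adj v.2 (hm v).adj_sub⟩
    invFun w := ⟨m w, hst.symm.mem_of_mem_adj w.2 (hm w).adj_sub⟩
    left_inv v := Subtype.ext (m_involutive v)
    right_inv w := Subtype.ext (m_involutive w) }⟩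

end PerfectMatching

section CompleteBipartite

variable {V α β : Type*}

theorem exists_le_completeBipartiteGraph_nonempty_iso {G : SimpleGraph V} {s t : Set V}
    (hst : G.IsBipartiteWith s t) (hcompl : IsCompl s t) (f : s ≃ α) (g : t ≃ β) :
    ∃ H ≤ completeBipartiteGraph α β, Nonempty (G ≃g H) := by
  classical
  obtain rfl : sᶜ = t := hcompl.compl_eq
  let e : V ≃ α ⊕ β := (Equiv.Set.sumCompl s).symm.trans (Equiv.sumCongr f g)
  have isLeft_e {v : V} (hv : v ∈ s) : (e v).isLeft := by
    simp [e, Equiv.Set.sumCompl_symm_apply_of_mem hv]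
  have isRight_e {v : V} (hv : v ∈ sᶜ) : (e v).isRight := by
    simp [e, Equiv.Set.sumCompl_symm_apply_of_notMem hv]
  refine ⟨G.map e.toEmbedding, ?_, ⟨Iso.map e G⟩⟩
  rintro _ _ ⟨-, v, w, hvw, rfl, rfl⟩
  exact (hst.mem_of_adj hvw).imp (fun ⟨hv, hw⟩ => ⟨isLeft_e hv, isRight_e hw⟩)
    (fun ⟨hv, hw⟩ => ⟨isRight_e hv, isLeft_e hw⟩)

theorem eq_or_exists_eq_deleteEdges_singleton [Finite V] {H K : SimpleGraph V} (hHK : H ≤ K)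
    (hcard : K.edgeSet.ncard ≤ H.edgeSet.ncard + 1) :
    H = K ∨ ∃ e ∈ K.edgeSet, H = K.deleteEdges {e} := by
  have hmissing : (K.edgeSet \ H.edgeSet).ncard ≤ 1 := by
    rw [Set.ncard_sdiff (edgeSet_mono hHK)]
    omega
  have hH := deleteEdges_sdiff_eq_of_le hHK
  obtain hempty | ⟨e, he⟩ := (Set.ncard_le_one_iff_subsingleton.mp hmissing).eq_empty_or_singleton
  · exact .inl (by rw [← hH, hempty, deleteEdges_empty])
  · exact .inr ⟨e, (he.ge rfl).1, by rw [← he, hH]⟩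

theorem nonempty_iso_completeBipartiteGraph_deleteEdges_singleton (a a' : α) (b b' : β) :
    Nonempty ((completeBipartiteGraph α β).deleteEdges {s(.inl a, .inr b)} ≃g
      (completeBipartiteGraph α β).deleteEdges {s(.inl a', .inr b')}) := by
  classical
  refine ⟨⟨Equiv.sumCongr (Equiv.swap a a') (Equiv.swap b b'), ?_⟩⟩
  rintro (x | x) (y | y) <;> simp [Equiv.swap_apply_eq_iff]

theorem nonempty_iso_or_nonempty_iso_deleteEdges_of_le_completeBipartiteGraph [Finite α] [Finite β]
    {H : SimpleGraph (α ⊕ β)} (hH : H ≤ completeBipartiteGraph α β)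
    (hcard : Nat.card α * Nat.card β ≤ H.edgeSet.ncard + 1) (a : α) (b : β) :
    Nonempty (H ≃g completeBipartiteGraph α β) ∨
      Nonempty (H ≃g (completeBipartiteGraph α β).deleteEdges {s(.inl a, .inr b)}) := by
  have hK : (completeBipartiteGraph α β).edgeSet.ncard = Nat.card α * Nat.card β := by
    rw [Set.ncard, encard_edgeSet_completeBipartiteGraph, ENat.toNat_mul]
    rfl
  obtain rfl | ⟨e, he, rfl⟩ := eq_or_exists_eq_deleteEdges_singleton hH (hK.trans_le hcard)
  · exact .inl ⟨Iso.refl⟩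
  · rw [edgeSet_completeBipartiteGraph] at he
    obtain ⟨⟨a', b'⟩, rfl⟩ := he
    exact .inr (nonempty_iso_completeBipartiteGraph_deleteEdges_singleton a' a b' b)

end CompleteBipartite

theorem nonempty_iso_of_isBipartite_of_isPerfectMatching {V α : Type*} [Finite V] [Finite α]
    {G : SimpleGraph V} (hG : G.IsBipartite) {M : G.Subgraph} (hM : M.IsPerfectMatching)
    (hV : Nat.card V = 2 * Nat.card α) (hE : Nat.card α ^ 2 ≤ G.edgeSet.ncard + 1) (a b : α) :
    Nonempty (G ≃g completeBipartiteGraph α α) ∨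
      Nonempty (G ≃g (completeBipartiteGraph α α).deleteEdges {s(.inl a, .inr b)}) := by
  obtain ⟨s, t, hst⟩ := hG.exists_isBipartiteWith
  have hcompl := isCompl_of_isBipartiteWith_of_isPerfectMatching hM hst
  obtain ⟨e⟩ := nonempty_equiv_of_isBipartiteWith_of_isPerfectMatching hM hst
  have hs : Nat.card s = Nat.card α := by
    have hadd := Set.ncard_add_ncard_compl s
    rw [hcompl.compl_eq, ← Nat.card_coe_set_eq, ← Nat.card_coe_set_eq, ← Nat.card_congr e] at hadd
    omega
  obtain ⟨f⟩ : Nonempty (s ≃ α) := Finite.card_eq.mp hs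
  obtain ⟨H, hH, ⟨φ⟩⟩ := exists_le_completeBipartiteGraph_nonempty_iso hst hcompl f (e.symm.trans f)
  have hEH : G.edgeSet.ncard = H.edgeSet.ncard := Nat.card_congr φ.mapEdgeSet
  have hcard : Nat.card α * Nat.card α ≤ H.edgeSet.ncard + 1 := by rwa [← sq, ← hEH]
  exact (nonempty_iso_or_nonempty_iso_deleteEdges_of_le_completeBipartiteGraph hH hcard a b).imp
    (fun ⟨ψ⟩ => ⟨φ.trans ψ⟩) (fun ⟨ψ⟩ => ⟨φ.trans ψ⟩)

theorem stmt_7_general {V α : Type*} [Fintype V] [Fintype α] (G : SimpleGraph V)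
    [DecidableRel G.Adj] (htf : G.CliqueFree 3) (hα : 3 ≤ Fintype.card α)
    (hV : Fintype.card V = 2 * Fintype.card α)
    (hE : Fintype.card α ^ 2 ≤ G.edgeFinset.card + 1)
    (hM : ∃ M : G.Subgraph, M.IsPerfectMatching) (a b : α) :
    G.Colorable 2 ∧
      (Nonempty (G ≃g completeBipartiteGraph α α) ∨
        Nonempty (G ≃g (completeBipartiteGraph α α).deleteEdges {s(.inl a, .inr b)})) := by
  obtain ⟨M, hM⟩ := hM
  have hlt : Fintype.card V * (Fintype.card V - 1) < 4 * G.edgeFinset.card := by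
    have hsq : 3 * Fintype.card α ≤ Fintype.card α ^ 2 := sq (Fintype.card α) ▸
      Nat.mul_le_mul_right _ hα
    rw [hV, Nat.mul_sub, mul_mul_mul_comm, ← sq (Fintype.card α)]
    omega
  have hbip := isBipartite_of_cliqueFree_three_of_lt_four_mul_card_edgeFinset htf hlt
  refine ⟨hbip, nonempty_iso_of_isBipartite_of_isPerfectMatching hbip hM ?_ ?_ a b⟩
  · rwa [Nat.card_eq_fintype_card, Nat.card_eq_fintype_card]
  · rwa [Nat.card_eq_fintype_card, ← coe_edgeFinset, Set.ncard_coe_finset]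

theorem stmt_7 (G : SimpleGraph (Fin 6)) [DecidableRel G.Adj] (htf : G.CliqueFree 3)
    (hE : 8 ≤ G.edgeFinset.card)
    (hM : ∃ M : G.Subgraph, M.IsPerfectMatching) :
    G.Colorable 2 ∧
      (Nonempty (G ≃g completeBipartiteGraph (Fin 3) (Fin 3)) ∨
        Nonempty (G ≃g K33minus)) :=
  stmt_7_general G htf (by simp) (by simp) (by simpa using Nat.succ_le_succ hE) hM 0 0
end

section
/- The graph K_{3,3} minus one edge is collapsible. -/
open SimpleGraph

/-- A finite simple graph is collapsible if for every even-cardinality set `R` of vertices,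
it has a spanning connected subgraph whose set of odd-degree vertices is exactly `R`. -/
def Collapsible {V : Type*} [Fintype V] (G : SimpleGraph V) : Prop :=
  ∀ R : Finset V, Even R.card →
    ∃ F : SimpleGraph V, F ≤ G ∧ F.Connected ∧
      ∀ v : V, (Odd ((F.neighborSet v).ncard) ↔ v ∈ R)

/-!
A spanning subgraph of a bipartite graph is a biadjacency matrix over `𝔽₂` whose row and column sums
are the degree parities. So one has to find, for all `r, c : 𝔽₂³` with the same total, a `3 × 3`
matrix with zero corner, row sums `r`, column sums `c` and connected graph. The parities at the two
ends of the missing edge guide the choice: an end of even parity takes both of its edges, an end of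
odd parity exactly one. One more entry of the inner `2 × 2` block (rows and columns `1` and `2`)
then determines the matrix. These choices can be made so that no row or column is empty and some
row, or some column, has a `1` in common with every other.
-/

/-- The bipartite graph on `α ⊕ β` whose edges are given by a relation `e` from `α` to `β`. -/
def bipartiteGraph {α β : Type*} (e : α → β → Prop) : SimpleGraph (α ⊕ β) where
  Adj
    | .inl i, .inr j => e i j
    | .inr j, .inl i => e i j
    | _, _ => False
  symm := ⟨by rintro (i | i) (j | j) h <;> exact h⟩
  loopless := ⟨by rintro (i | i) h <;> exact h⟩

namespace bipartiteGraph

variable {α β : Type*} {e : α → β → Prop}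

theorem adj_inl_inr {i : α} {j : β} (h : e i j) : (bipartiteGraph e).Adj (.inl i) (.inr j) := h

theorem ncard_neighborSet_inl (e : α → β → Prop) (i : α) :
    ((bipartiteGraph e).neighborSet (.inl i)).ncard = {j | e i j}.ncard := by
  rw [← Set.ncard_image_of_injective {j | e i j} (Sum.inr_injective (α := α))]
  congr 1
  ext (k | k) <;> simp [bipartiteGraph]

theorem ncard_neighborSet_inr (e : α → β → Prop) (j : β) :
    ((bipartiteGraph e).neighborSet (.inr j)).ncard = {i | e i j}.ncard := by
  rw [← Set.ncard_image_of_injective {i | e i j} (Sum.inl_injective (β := β))]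
  congr 1
  ext (k | k) <;> simp [bipartiteGraph]

theorem le_iff {G : SimpleGraph (α ⊕ β)} :
    bipartiteGraph e ≤ G ↔ ∀ i j, e i j → G.Adj (.inl i) (.inr j) := by
  refine ⟨fun h i j hij => h (adj_inl_inr hij), fun h => ?_⟩
  rintro (i | i) (j | j) hij
  · exact hij.elim
  · exact h i j hij
  · exact (h j i hij).symm
  · exact hij.elim

/-- The isomorphism that exchanges the two sides. -/
def flipIso (e : α → β → Prop) : bipartiteGraph e ≃g bipartiteGraph (flip e) where
  toEquiv := Equiv.sumComm α β
  map_rel_iff' := by rintro (i | i) (j | j) <;> rfl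

theorem connected_of_common_neighbors (k : α) (h_left : ∀ i, ∃ j, e i j ∧ e k j)
    (h_right : ∀ j, ∃ i, e i j) : (bipartiteGraph e).Connected := by
  have reachable_inl (i : α) : (bipartiteGraph e).Reachable (.inl k) (.inl i) := by
    obtain ⟨j, hij, hkj⟩ := h_left i
    exact (adj_inl_inr hkj).reachable.trans (adj_inl_inr hij).symm.reachable
  refine (connected_iff_exists_forall_reachable _).2 ⟨.inl k, ?_⟩
  rintro (i | j)
  · exact reachable_inl i
  · obtain ⟨i, hij⟩ := h_right j
    exact (reachable_inl i).trans (adj_inl_inr hij).reachable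

end bipartiteGraph

theorem odd_ncard_setOf_eq_one_iff {ι : Type*} [Fintype ι] (f : ι → ZMod 2) :
    Odd {i | f i = 1}.ncard ↔ ∑ i, f i = 1 := by
  have ite_eq_self (x : ZMod 2) : (if x = 1 then 1 else 0) = x := by
    revert x
    decide
  have cast_ncard : ({i | f i = 1}.ncard : ZMod 2) = ∑ i, f i := by
    rw [Set.ncard_eq_toFinset_card', Set.toFinset_ofPred, Finset.natCast_card_filter]
    simp only [ite_eq_self]
  rw [← ZMod.natCast_eq_one_iff_odd, cast_ncard]

/-- `A` is the biadjacency matrix over `𝔽₂` of a connected bipartite graph whose degrees have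
parities `r` on the left and `c` on the right. -/
structure IsConnectedRealization {α β : Type*} [Fintype α] [Fintype β]
    (A : Matrix α β (ZMod 2)) (r : α → ZMod 2) (c : β → ZMod 2) : Prop where
  row_sum : ∀ i, ∑ j, A i j = r i
  col_sum : ∀ j, ∑ i, A i j = c j
  connected : (bipartiteGraph fun i j => A i j = 1).Connected

section IsConnectedRealization

variable {α β : Type*} [Fintype α] [Fintype β]

theorem IsConnectedRealization.transpose {A : Matrix α β (ZMod 2)} {r : α → ZMod 2}
    {c : β → ZMod 2} (h : IsConnectedRealization A r c) :
    IsConnectedRealization A.transpose c r where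
  row_sum := h.col_sum
  col_sum := h.row_sum
  connected := (bipartiteGraph.flipIso _).connected_iff.1 h.connected

theorem collapsible_of_forall_exists_isConnectedRealization {G : SimpleGraph (α ⊕ β)}
    (h : ∀ (r : α → ZMod 2) (c : β → ZMod 2), ∑ i, r i = ∑ j, c j →
      ∃ A : Matrix α β (ZMod 2), IsConnectedRealization A r c ∧
        ∀ i j, A i j = 1 → G.Adj (.inl i) (.inr j)) :
    Collapsible G := by
  classical
  intro R hR
  let χ : α ⊕ β → ZMod 2 := fun v => if v ∈ R then 1 else 0
  have χ_eq_one_iff (v : α ⊕ β) : χ v = 1 ↔ v ∈ R := by simp [χ]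
  have sum_inl_eq_sum_inr : ∑ i, χ (.inl i) = ∑ j, χ (.inr j) := by
    have sum_χ : ∑ v, χ v = 0 := by simpa [χ, ZMod.natCast_eq_zero_iff_even] using hR
    rwa [Fintype.sum_sum_type, CharTwo.add_eq_zero] at sum_χ
  obtain ⟨A, hA, hAG⟩ := h _ _ sum_inl_eq_sum_inr
  refine ⟨_, bipartiteGraph.le_iff.2 hAG, hA.connected, ?_⟩
  rintro (i | j)
  · rw [bipartiteGraph.ncard_neighborSet_inl, odd_ncard_setOf_eq_one_iff, hA.row_sum, χ_eq_one_iff]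
  · rw [bipartiteGraph.ncard_neighborSet_inr, odd_ncard_setOf_eq_one_iff fun i => A i j,
      hA.col_sum, χ_eq_one_iff]

end IsConnectedRealization

section FinThree

theorem forall_fin_three {p : Fin 3 → Prop} : (∀ i, p i) ↔ p 0 ∧ p 1 ∧ p 2 := by
  simp [Fin.forall_fin_succ]

theorem zmod_two_eq_zero_or_eq_one (x : ZMod 2) : x = 0 ∨ x = 1 :=
  (em _).imp_right (Fin.eq_one_of_ne_zero x)

theorem zmod_two_eq_one_or_add_one_eq_one (x : ZMod 2) : x = 1 ∨ x + 1 = 1 := by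
  rw [add_eq_right]
  exact (zmod_two_eq_zero_or_eq_one x).symm

variable {r c : Fin 3 → ZMod 2}

theorem exists_isConnectedRealization_corner_eq_zero_of_zero_of_zero (h : ∑ i, r i = ∑ j, c j)
    (hr : r 0 = 0) (hc : c 0 = 0) :
    ∃ A : Matrix (Fin 3) (Fin 3) (ZMod 2), A 0 0 = 0 ∧ IsConnectedRealization A r c := by
  -- With both edges taken at either end, a single edge of the inner block, here at `(1, 1)`,
  -- connects the two resulting paths.
  refine ⟨!![0, 1, 1; 1, 1, r 1; 1, c 1, 1 + c 1 + r 2], rfl, ?row_sum, ?col_sum,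
    bipartiteGraph.connected_of_common_neighbors 1 ?left ?right⟩
  case row_sum | col_sum =>
    simp only [forall_fin_three, Fin.sum_univ_three, Matrix.of_apply, Matrix.cons_val] at h ⊢
    grind
  case left =>
    exact forall_fin_three.2 ⟨⟨1, rfl, rfl⟩, ⟨1, rfl, rfl⟩, ⟨0, rfl, rfl⟩⟩
  case right =>
    exact forall_fin_three.2 ⟨⟨1, rfl⟩, ⟨0, rfl⟩, ⟨0, rfl⟩⟩

theorem exists_isConnectedRealization_corner_eq_zero_of_zero_of_one (h : ∑ i, r i = ∑ j, c j)
    (hr : r 0 = 0) (hc : c 0 = 1) :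
    ∃ A : Matrix (Fin 3) (Fin 3) (ZMod 2), A 0 0 = 0 ∧ IsConnectedRealization A r c := by
  -- The entry at `(1, 0)` makes row `1` of the inner block odd, hence nonzero; the entry `1` at
  -- `(2, 1)` makes row `2` of that block nonzero.
  refine ⟨!![0, 1, 1; r 1 + 1, c 1, c 1 + 1; r 1, 1, r 1 + r 2 + 1], rfl, ?row_sum, ?col_sum,
    bipartiteGraph.connected_of_common_neighbors 0 ?left ?right⟩
  case row_sum | col_sum =>
    simp only [forall_fin_three, Fin.sum_univ_three, Matrix.of_apply, Matrix.cons_val] at h ⊢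
    grind
  case left =>
    refine forall_fin_three.2 ⟨⟨1, rfl, rfl⟩, ?_, ⟨1, rfl, rfl⟩⟩
    rcases zmod_two_eq_one_or_add_one_eq_one (c 1) with h₁ | h₂
    exacts [⟨1, h₁, rfl⟩, ⟨2, h₂, rfl⟩]
  case right =>
    refine forall_fin_three.2 ⟨?_, ⟨0, rfl⟩, ⟨0, rfl⟩⟩
    rcases zmod_two_eq_one_or_add_one_eq_one (r 1) with h₁ | h₂
    exacts [⟨2, h₁⟩, ⟨1, h₂⟩]

theorem exists_isConnectedRealization_corner_eq_zero_of_one_of_one (h : ∑ i, r i = ∑ j, c j)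
    (hr : r 0 = 1) (hc : c 0 = 1) :
    ∃ A : Matrix (Fin 3) (Fin 3) (ZMod 2), A 0 0 = 0 ∧ IsConnectedRealization A r c := by
  -- The entries at `(1, 0)` and `(0, 1)` make row `1` and column `1` of the inner block even, so
  -- that the entry `1` at `(1, 1)` fills both of them.
  refine ⟨!![0, c 1, c 1 + 1; r 1, 1, 1; r 1 + 1, 1, r 1 + r 2], rfl, ?row_sum, ?col_sum,
    bipartiteGraph.connected_of_common_neighbors 1 ?left ?right⟩
  case row_sum | col_sum =>
    simp only [forall_fin_three, Fin.sum_univ_three, Matrix.of_apply, Matrix.cons_val] at h ⊢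
    grind
  case left =>
    refine forall_fin_three.2 ⟨?_, ⟨1, rfl, rfl⟩, ⟨1, rfl, rfl⟩⟩
    rcases zmod_two_eq_one_or_add_one_eq_one (c 1) with h₁ | h₂
    exacts [⟨1, h₁, rfl⟩, ⟨2, h₂, rfl⟩]
  case right =>
    refine forall_fin_three.2 ⟨?_, ⟨1, rfl⟩, ⟨1, rfl⟩⟩
    rcases zmod_two_eq_one_or_add_one_eq_one (r 1) with h₁ | h₂
    exacts [⟨1, h₁⟩, ⟨2, h₂⟩]

theorem exists_isConnectedRealization_corner_eq_zero (h : ∑ i, r i = ∑ j, c j) :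
    ∃ A : Matrix (Fin 3) (Fin 3) (ZMod 2), A 0 0 = 0 ∧ IsConnectedRealization A r c := by
  rcases zmod_two_eq_zero_or_eq_one (r 0) with hr | hr <;>
    rcases zmod_two_eq_zero_or_eq_one (c 0) with hc | hc
  · exact exists_isConnectedRealization_corner_eq_zero_of_zero_of_zero h hr hc
  · exact exists_isConnectedRealization_corner_eq_zero_of_zero_of_one h hr hc
  · obtain ⟨A, hA₀, hA⟩ := exists_isConnectedRealization_corner_eq_zero_of_zero_of_one h.symm hc hr
    exact ⟨A.transpose, hA₀, hA.transpose⟩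
  · exact exists_isConnectedRealization_corner_eq_zero_of_one_of_one h hr hc

end FinThree

theorem K33minus_adj_inl_inr {i j : Fin 3} :
    K33minus.Adj (.inl i) (.inr j) ↔ ¬(i = 0 ∧ j = 0) := by
  simp [K33minus]

theorem stmt_10 : Collapsible K33minus := by
  refine collapsible_of_forall_exists_isConnectedRealization fun r c h => ?_
  obtain ⟨A, hA₀, hA⟩ := exists_isConnectedRealization_corner_eq_zero h
  refine ⟨A, hA, fun i j hij => K33minus_adj_inl_inr.2 ?_⟩
  rintro ⟨rfl, rfl⟩
  exact zero_ne_one (hA₀.symm.trans hij)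
end

section
/- Let H be an essentially 2-edge-connected graph and let xy be an edge of H with deg(x) ≥ 2 and deg(y) ≥ 2, such that the graph H − {x,y} has at most 2 edges. Then H has a dominating closed trail containing both x and y. -/
open SimpleGraph

/-!
Write `G - {x, y}` for the graph with `x` and `y` removed; at most two edges force each of its
components to be a star. For every star containing an edge, essential 2-edge-connectedness provides
two attachment edges to `{x, y}` that extend a trail of the star to an *ear*: a trail between
vertices of `{x, y}` that dominates the star. Applied to the edge `xy` it also provides a component
attached to both `x` and `y`, whose ear can be chosen to run from `x` to `y`. Starting from this
ear, absorb the ears of the other components one after the other, by insertion if their ends agree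
and by concatenation otherwise. No ear uses the edge `xy`, so if the resulting trail from `x` ends
at `y`, this edge closes it.
-/

section Walk

variable {V : Type*} {G : SimpleGraph V}

theorem exists_walk_insert_closed {a b u : V} (w : G.Walk a b) (l : G.Walk u u)
    (hu : u ∈ w.support) :
    ∃ m : G.Walk a b, m.edges.Perm (w.edges ++ l.edges) ∧
      ∀ z, z ∈ m.support ↔ z ∈ w.support ∨ z ∈ l.support := by
  obtain ⟨p, q, rfl⟩ := w.mem_support_iff_exists_append.mp hu
  refine ⟨(p.append l).append q, ?_, fun z => ?_⟩
  · simpa only [Walk.edges_append, List.append_assoc] using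
      List.perm_append_comm.append_left p.edges
  · simp only [Walk.mem_support_append_iff]
    tauto

theorem exists_walk_absorb {x y t u v : V} (w : G.Walk x t) (l : G.Walk u v)
    (ht : t = x ∨ t = y) (hy : y ∈ w.support) (hu : u = x ∨ u = y) (hv : v = x ∨ v = y) :
    ∃ t', (t' = x ∨ t' = y) ∧ ∃ m : G.Walk x t', m.edges.Perm (w.edges ++ l.edges) ∧
      ∀ z, z ∈ m.support ↔ z ∈ w.support ∨ z ∈ l.support := by
  by_cases huv : u = v
  · subst huv
    have hu : u ∈ w.support := by
      rcases hu with rfl | rfl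
      exacts [w.start_mem_support, hy]
    exact ⟨t, ht, exists_walk_insert_closed w l hu⟩
  by_cases hut : u = t
  · subst hut
    exact ⟨v, hv, w.append l, by rw [Walk.edges_append],
      fun z => Walk.mem_support_append_iff ..⟩
  · obtain rfl : v = t := by grind
    refine ⟨u, hu, w.append l.reverse, ?_, fun z => ?_⟩
    · rw [Walk.edges_append, Walk.edges_reverse]
      exact (List.reverse_perm _).append_left _
    · rw [Walk.mem_support_append_iff, Walk.support_reverse, List.mem_reverse]

theorem isTrail_cons_concat {s₁ s₂ t₁ t₂ : V} {q : G.Walk s₁ s₂} (hq : q.IsTrail)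
    (h₁ : G.Adj t₁ s₁) (h₂ : G.Adj s₂ t₂) (ht₁ : t₁ ∉ q.support) (ht₂ : t₂ ∉ q.support)
    (hne : s₁ ≠ s₂ ∨ t₁ ≠ t₂) : ((q.concat h₂).cons h₁).IsTrail := by
  have htrail : (q.concat h₂).IsTrail := by
    rw [Walk.isTrail_def, Walk.edges_concat]
    exact hq.edges_nodup.concat fun h => ht₂ (q.snd_mem_support_of_mem_edges h)
  have ht₁s₂ : t₁ ≠ s₂ := fun h => ht₁ (h ▸ q.end_mem_support)
  refine htrail.cons h₁ ?_
  rw [Walk.edges_concat, List.concat_eq_append, List.mem_append, List.mem_singleton]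
  refine not_or_intro (fun h => ht₁ (q.fst_mem_support_of_mem_edges h)) ?_
  rw [Sym2.eq_iff]
  tauto

end Walk

section Connectivity

variable {V : Type*}

/-- A graph is essentially 2-edge-connected if deleting any edge leaves all remaining edges in one
component; isolated vertices are allowed. -/
def EssentiallyTwoEdgeConnected (G : SimpleGraph V) : Prop :=
  ∀ e ∈ G.edgeSet, ∀ a b c d : V, (G.deleteEdges {e}).Adj a b → (G.deleteEdges {e}).Adj c d →
    (G.deleteEdges {e}).Reachable a c

theorem EssentiallyTwoEdgeConnected.exists_crossing_adj {G : SimpleGraph V}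
    (hG : EssentiallyTwoEdgeConnected G) {e : Sym2 V} (he : e ∈ G.edgeSet) (S : Set V)
    {a b c d : V} (hab : G.Adj a b) (habe : s(a, b) ≠ e) (ha : a ∈ S)
    (hcd : G.Adj c d) (hcde : s(c, d) ≠ e) (hc : c ∉ S) :
    ∃ s ∈ S, ∃ t ∉ S, G.Adj s t ∧ s(s, t) ≠ e := by
  obtain ⟨w⟩ := hG e he a b c d (deleteEdges_adj.mpr ⟨hab, habe⟩) (deleteEdges_adj.mpr ⟨hcd, hcde⟩)
  obtain ⟨δ, -, hs, ht⟩ := w.exists_boundary_dart S ha hc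
  exact ⟨_, hs, _, ht, deleteEdges_adj.mp δ.adj⟩

end Connectivity

section Star

variable {V : Type*} {H : SimpleGraph V}

/-- A graph is a star forest (every component is a star) if every edge has an end of degree one.
Isolated vertices count as stars. -/
def IsStarForest (H : SimpleGraph V) : Prop :=
  ∀ a c, H.Adj a c → (∀ p, H.Adj a p → p = c) ∨ (∀ q, H.Adj c q → q = a)

/-- A vertex is a star center if it lies on every edge of its component. -/
def IsStarCenter (H : SimpleGraph V) (b : V) : Prop :=
  ∀ a c, H.Reachable b a → H.Adj a c → a = b ∨ c = b

theorem isStarForest_of_ncard_edgeSet_le_two (hfin : H.edgeSet.Finite)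
    (hcard : H.edgeSet.ncard ≤ 2) : IsStarForest H := by
  intro a c hac
  by_contra! ⟨⟨p, hap, hpc⟩, q, hcq, hqa⟩
  have hne := hac.ne
  refine hcard.not_gt ((Set.two_lt_ncard hfin).mpr
    ⟨s(a, c), hac, s(a, p), hap, s(c, q), hcq, ?_, ?_, ?_⟩) <;>
  grind [Sym2.eq_iff]

theorem IsStarForest.isStarCenter_of_adj_leaf (hH : IsStarForest H) {a c : V} (hac : H.Adj a c)
    (hc : ∀ q, H.Adj c q → q = a) : IsStarCenter H a := by
  have eq_of_adj {z w : V} (haz : H.Adj a z) (hzw : H.Adj z w) : w = a := by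
    rcases hH a z haz with ha | hz
    · exact hc w (ha c hac ▸ hzw)
    · exact hz w hzw
  have eq_or_adj {z : V} (haz : H.Reachable a z) : z = a ∨ H.Adj a z := by
    rw [reachable_iff_reflTransGen] at haz
    induction haz with
    | refl => exact .inl rfl
    | tail _ hvz ih =>
      rcases ih with rfl | hav
      exacts [.inr hvz, .inl (eq_of_adj hav hvz)]
  exact fun z w haz hzw => (eq_or_adj haz).imp_right fun h => eq_of_adj h hzw

theorem IsStarForest.exists_isStarCenter (hH : IsStarForest H) (a : V) :
    ∃ b, H.Reachable a b ∧ IsStarCenter H b := by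
  by_cases ha : ∃ c, H.Adj a c
  · obtain ⟨c, hac⟩ := ha
    rcases hH a c hac with ha | hc
    · exact ⟨c, hac.reachable, hH.isStarCenter_of_adj_leaf hac.symm ha⟩
    · exact ⟨a, .rfl, hH.isStarCenter_of_adj_leaf hac hc⟩
  · refine ⟨a, .rfl, fun z w ⟨p⟩ hzw => ?_⟩
    cases p with
    | nil => exact .inl rfl
    | cons h _ => exact absurd ⟨_, h⟩ ha

theorem IsStarCenter.exists_isTrail {b s₁ s₂ : V} (hb : IsStarCenter H b)
    (hs₁ : H.Reachable b s₁) (hs₂ : H.Reachable b s₂) (h : s₁ ≠ s₂ ∨ s₁ = b) :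
    ∃ q : H.Walk s₁ s₂, q.IsTrail ∧ b ∈ q.support := by
  obtain ⟨q, hq⟩ := (hs₁.symm.trans hs₂).exists_isPath
  refine ⟨q, hq.isTrail, ?_⟩
  cases q with
  | nil => simpa [eq_comm] using h
  | cons hadj q =>
    rcases hb _ _ hs₁ hadj with rfl | rfl
    · exact Walk.start_mem_support _
    · exact List.mem_cons_of_mem _ q.start_mem_support

theorem IsStarCenter.adj {a b : V} (hb : IsStarCenter H b) (ha : H.Reachable b a) (hab : a ≠ b) :
    H.Adj a b := by
  obtain ⟨p⟩ := ha.symm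
  cases p with
  | nil => exact absurd rfl hab
  | cons h _ => exact (hb _ _ ha h).resolve_left hab ▸ h

end Star

section PairDeletion

variable {V : Type*} {G : SimpleGraph V} {x y : V}

/-- The graph `G - {x, y}`, encoded on the vertex type of `G`: the vertices `x` and `y` are kept,
but isolated. -/
def pairDeletion (G : SimpleGraph V) (x y : V) : SimpleGraph V :=
  (G.deleteIncidenceSet x).deleteIncidenceSet y

theorem pairDeletion_adj {a b : V} :
    (pairDeletion G x y).Adj a b ↔ G.Adj a b ∧ (a ≠ x ∧ a ≠ y) ∧ b ≠ x ∧ b ≠ y := by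
  simp only [pairDeletion, deleteIncidenceSet_adj]
  tauto

theorem pairDeletion_le : pairDeletion G x y ≤ G := fun _ _ h => (pairDeletion_adj.mp h).1

theorem edgeSet_pairDeletion :
    (pairDeletion G x y).edgeSet = {e ∈ G.edgeSet | x ∉ e ∧ y ∉ e} := by
  ext e
  induction e with | _ a b
  simp only [mem_edgeSet, pairDeletion_adj, Set.mem_ofPred_eq, Sym2.mem_iff]
  grind

theorem ne_and_ne_of_reachable_pairDeletion {a b : V} (hab : (pairDeletion G x y).Reachable a b)
    (ha : a ≠ x ∧ a ≠ y) : b ≠ x ∧ b ≠ y := by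
  rw [reachable_iff_reflTransGen] at hab
  induction hab with
  | refl => exact ha
  | tail _ hbc _ => exact (pairDeletion_adj.mp hbc).2.2

theorem eq_or_eq_of_not_reachable_pairDeletion {b s t : V} (hb : b ≠ x ∧ b ≠ y)
    (hs : (pairDeletion G x y).Reachable b s) (hst : G.Adj s t)
    (ht : ¬ (pairDeletion G x y).Reachable b t) : t = x ∨ t = y := by
  by_contra! htxy
  have hs' := ne_and_ne_of_reachable_pairDeletion hs hb
  exact ht (hs.trans (pairDeletion_adj.mpr ⟨hst, hs', htxy⟩).reachable)

end PairDeletion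

section Ear

variable {V : Type*} {G : SimpleGraph V} {x y : V}

/-- A trail of `G` between vertices of `{x, y}` (possibly equal, possibly passed in between) that
dominates the components of `G - {x, y}` in `𝒞` and each of whose edges has an end in one of these
components. In particular it avoids the edge `xy`. -/
structure IsDominatingEar (G : SimpleGraph V) (x y : V)
    (𝒞 : Set (pairDeletion G x y).ConnectedComponent) {u v : V} (l : G.Walk u v) : Prop where
  start_eq : u = x ∨ u = y
  end_eq : v = x ∨ v = y
  isTrail : l.IsTrail
  edges_meet : ∀ e ∈ l.edges, ∃ z ∈ e, (z ≠ x ∧ z ≠ y) ∧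
    (pairDeletion G x y).connectedComponentMk z ∈ 𝒞
  dominates : ∀ a b, (pairDeletion G x y).Adj a b →
    (pairDeletion G x y).connectedComponentMk a ∈ 𝒞 → a ∈ l.support ∨ b ∈ l.support

/-- Some dominating ear of the components in `𝒞` starts at `x` and visits `y`. -/
def HasSpanningEar (G : SimpleGraph V) (x y : V)
    (𝒞 : Set (pairDeletion G x y).ConnectedComponent) : Prop :=
  ∃ t, ∃ w : G.Walk x t, IsDominatingEar G x y 𝒞 w ∧ y ∈ w.support

theorem IsDominatingEar.edges_disjoint {𝒞 𝒟 : Set (pairDeletion G x y).ConnectedComponent}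
    {t u v w : V} {l : G.Walk t u} {m : G.Walk v w} (hl : IsDominatingEar G x y 𝒞 l)
    (hm : IsDominatingEar G x y 𝒟 m) (hd : Disjoint 𝒞 𝒟) : l.edges.Disjoint m.edges := by
  intro e hel hem
  obtain ⟨a, hae, ha, haC⟩ := hl.edges_meet e hel
  obtain ⟨b, hbe, hb, hbD⟩ := hm.edges_meet e hem
  have hab : (pairDeletion G x y).Reachable a b := by
    by_cases h : a = b
    · exact h ▸ .rfl
    · have he := l.edges_subset_edgeSet hel
      rw [(Sym2.mem_and_mem_iff h).mp ⟨hae, hbe⟩] at he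
      exact (pairDeletion_adj.mpr ⟨he, ha, hb⟩).reachable
  exact Set.disjoint_left.mp hd haC (ConnectedComponent.eq.mpr hab ▸ hbD)

theorem HasSpanningEar.union {𝒞 𝒟 : Set (pairDeletion G x y).ConnectedComponent}
    (hC : HasSpanningEar G x y 𝒞) {u v : V} {l : G.Walk u v} (hl : IsDominatingEar G x y 𝒟 l)
    (hd : Disjoint 𝒞 𝒟) : HasSpanningEar G x y (𝒞 ∪ 𝒟) := by
  obtain ⟨t, w, hw, hy⟩ := hC
  obtain ⟨t', ht', m, hedges, hsupp⟩ :=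
    exists_walk_absorb w l hw.end_eq hy hl.start_eq hl.end_eq
  refine ⟨t', m, ⟨.inl rfl, ht', ?_, fun e he => ?_, fun a b hab ha => ?_⟩,
    (hsupp y).mpr (.inl hy)⟩
  · rw [Walk.isTrail_def, hedges.nodup_iff, List.nodup_append']
    exact ⟨hw.isTrail.edges_nodup, hl.isTrail.edges_nodup, hw.edges_disjoint hl hd⟩
  · rcases List.mem_append.mp (hedges.mem_iff.mp he) with he | he
    · obtain ⟨z, hze, hz, hzC⟩ := hw.edges_meet e he
      exact ⟨z, hze, hz, .inl hzC⟩
    · obtain ⟨z, hze, hz, hzD⟩ := hl.edges_meet e he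
      exact ⟨z, hze, hz, .inr hzD⟩
  · simp only [hsupp]
    rcases ha with ha | ha
    · exact (hw.dominates a b hab ha).imp .inl .inl
    · exact (hl.dominates a b hab ha).imp .inr .inr

theorem HasSpanningEar.exists_closed_trail {𝒞 : Set (pairDeletion G x y).ConnectedComponent}
    (hC : HasSpanningEar G x y 𝒞) (hxy : G.Adj x y) :
    ∃ (t₀ : V) (c : G.Walk t₀ t₀), c.IsTrail ∧ x ∈ c.support ∧ y ∈ c.support ∧
      ∀ a b, (pairDeletion G x y).Adj a b → (pairDeletion G x y).connectedComponentMk a ∈ 𝒞 →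
        a ∈ c.support ∨ b ∈ c.support := by
  obtain ⟨t, w, hw, hy⟩ := hC
  rcases hw.end_eq with rfl | rfl
  · exact ⟨_, w, hw.isTrail, w.start_mem_support, hy, hw.dominates⟩
  · have hnotMem : s(t, x) ∉ w.edges := by
      intro h
      obtain ⟨z, hz, hzxy, -⟩ := hw.edges_meet _ h
      exact (Sym2.mem_iff.mp hz).elim hzxy.2 hzxy.1
    refine ⟨_, w.cons hxy.symm, hw.isTrail.cons hxy.symm hnotMem, ?_, Walk.start_mem_support _,
      fun a b hab ha => ?_⟩
    · exact List.mem_cons_of_mem _ w.start_mem_support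
    · exact (hw.dominates a b hab ha).imp (List.mem_cons_of_mem _) (List.mem_cons_of_mem _)

theorem exists_isDominatingEar_of_isTrail {b s₁ s₂ t₁ t₂ : V} (hbxy : b ≠ x ∧ b ≠ y)
    (hs₁ : (pairDeletion G x y).Reachable b s₁) (q : (pairDeletion G x y).Walk s₁ s₂)
    (hq : q.IsTrail) (ht₁ : t₁ = x ∨ t₁ = y) (ht₂ : t₂ = x ∨ t₂ = y)
    (h₁ : G.Adj s₁ t₁) (h₂ : G.Adj s₂ t₂) (hne : s₁ ≠ s₂ ∨ t₁ ≠ t₂)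
    (hdom : ∀ a c, (pairDeletion G x y).Reachable b a → (pairDeletion G x y).Adj a c →
      a ∈ q.support ∨ c ∈ q.support) :
    ∃ l : G.Walk t₁ t₂,
      IsDominatingEar G x y {(pairDeletion G x y).connectedComponentMk b} l := by
  have hreach : ∀ z ∈ q.support, (pairDeletion G x y).Reachable b z := by
    intro z hz
    obtain ⟨p, -, -⟩ := q.mem_support_iff_exists_append.mp hz
    exact hs₁.trans p.reachable
  have notMem_support {t : V} (ht : t = x ∨ t = y) : t ∉ (q.mapLe pairDeletion_le).support := by
    rw [Walk.support_mapLe_eq_support]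
    intro h
    have htxy := ne_and_ne_of_reachable_pairDeletion (hreach t h) hbxy
    exact ht.elim htxy.1 htxy.2
  have htrail : (((q.mapLe pairDeletion_le).concat h₂).cons h₁.symm).IsTrail :=
    isTrail_cons_concat (hq.mapLe pairDeletion_le) h₁.symm h₂ (notMem_support ht₁)
      (notMem_support ht₂) hne
  refine ⟨_, ht₁, ht₂, htrail, fun e he => ?_, fun a c hac ha => ?_⟩
  · suffices ∃ z ∈ e, z ∈ q.support by
      obtain ⟨z, hze, hz⟩ := this
      exact ⟨z, hze, ne_and_ne_of_reachable_pairDeletion (hreach z hz) hbxy,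
        ConnectedComponent.eq.mpr (hreach z hz).symm⟩
    simp only [Walk.edges_cons, Walk.edges_concat, Walk.edges_mapLe_eq_edges,
      List.concat_eq_append, List.mem_cons, List.mem_append, List.not_mem_nil, or_false] at he
    rcases he with rfl | he | rfl
    · exact ⟨s₁, Sym2.mem_mk_right .., q.start_mem_support⟩
    · induction e with | _ a c
      exact ⟨a, Sym2.mem_mk_left .., q.fst_mem_support_of_mem_edges he⟩
    · exact ⟨s₂, Sym2.mem_mk_left .., q.end_mem_support⟩
  · have hac' := hdom a c (ConnectedComponent.eq.mp ha).symm hac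
    simp only [Walk.support_cons, Walk.support_concat, Walk.support_mapLe_eq_support,
      List.mem_cons, List.mem_append]
    tauto

theorem IsStarCenter.exists_isDominatingEar {b s₁ s₂ t₁ t₂ : V}
    (hb : IsStarCenter (pairDeletion G x y) b) (hbxy : b ≠ x ∧ b ≠ y)
    (hs₁ : (pairDeletion G x y).Reachable b s₁) (hs₂ : (pairDeletion G x y).Reachable b s₂)
    (ht₁ : t₁ = x ∨ t₁ = y) (ht₂ : t₂ = x ∨ t₂ = y) (h₁ : G.Adj s₁ t₁) (h₂ : G.Adj s₂ t₂)
    (hne : s₁ ≠ s₂ ∨ s₁ = b ∧ t₁ ≠ t₂) :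
    ∃ l : G.Walk t₁ t₂,
      IsDominatingEar G x y {(pairDeletion G x y).connectedComponentMk b} l := by
  obtain ⟨q, hq, hbq⟩ := hb.exists_isTrail hs₁ hs₂ (hne.imp_right And.left)
  refine exists_isDominatingEar_of_isTrail hbxy hs₁ q hq ht₁ ht₂ h₁ h₂ (hne.imp_right And.right)
    fun a c ha hac => ?_
  rcases hb a c ha hac with rfl | rfl
  exacts [.inl hbq, .inr hbq]

end Ear

section Attachment

variable {V : Type*} {G : SimpleGraph V} {x y : V}

theorem IsStarCenter.exists_attachment_ne {a b c d : V}
    (hb : IsStarCenter (pairDeletion G x y) b) (hG : EssentiallyTwoEdgeConnected G)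
    (hxy : G.Adj x y) (hbxy : b ≠ x ∧ b ≠ y) (ha : (pairDeletion G x y).Reachable b a)
    (hab : a ≠ b) (hc : (pairDeletion G x y).Reachable b c) (hcd : (pairDeletion G x y).Adj c d)
    (hca : c ≠ a) (hda : d ≠ a) :
    ∃ s t, (pairDeletion G x y).Reachable b s ∧ s ≠ a ∧ (t = x ∨ t = y) ∧ G.Adj s t := by
  have hxb : ¬ (pairDeletion G x y).Reachable b x := fun h =>
    (ne_and_ne_of_reachable_pairDeletion h hbxy).1 rfl
  have haxy := ne_and_ne_of_reachable_pairDeletion ha hbxy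
  obtain ⟨s, ⟨hs, hsa⟩, t, ht, hst, hne⟩ := hG.exists_crossing_adj (e := s(a, b))
    (pairDeletion_le (hb.adj ha hab)) {z | (pairDeletion G x y).Reachable b z ∧ z ≠ a}
    (pairDeletion_le hcd) (by grind [Sym2.eq_iff]) ⟨hc, hca⟩ hxy (by grind [Sym2.eq_iff])
    (fun h => hxb h.1)
  refine ⟨s, t, hs, hsa, eq_or_eq_of_not_reachable_pairDeletion hbxy hs hst fun htb => ht ⟨htb, ?_⟩,
    hst⟩
  rintro rfl
  have hsxy := ne_and_ne_of_reachable_pairDeletion hs hbxy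
  obtain rfl := (hb s t hs (pairDeletion_adj.mpr ⟨hst, hsxy, haxy⟩)).resolve_right hab
  exact hne Sym2.eq_swap

theorem IsStarCenter.exists_isDominatingEar_of_adj_of_adj {b p r : V}
    (hb : IsStarCenter (pairDeletion G x y) b) (hG : EssentiallyTwoEdgeConnected G)
    (hxy : G.Adj x y) (hbxy : b ≠ x ∧ b ≠ y)
    (hp : (pairDeletion G x y).Reachable b p) (hr : (pairDeletion G x y).Reachable b r)
    (hpx : G.Adj p x) (hry : G.Adj r y) :
    ∃ l : G.Walk x y,
      IsDominatingEar G x y {(pairDeletion G x y).connectedComponentMk b} l := by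
  by_cases hpr : p ≠ r ∨ p = b
  · exact hb.exists_isDominatingEar hbxy hp hr (.inl rfl) (.inr rfl) hpx hry
      (hpr.imp_right fun h => ⟨h, hxy.ne⟩)
  push Not at hpr
  obtain ⟨rfl, hpb⟩ := hpr
  by_cases hcover : ∀ c d, (pairDeletion G x y).Reachable b c → (pairDeletion G x y).Adj c d →
      c = p ∨ d = p
  · refine exists_isDominatingEar_of_isTrail hbxy hp .nil .nil (.inl rfl) (.inr rfl) hpx hry
      (.inr hxy.ne) fun c d hc hcd => ?_
    simpa only [Walk.support_nil, List.mem_singleton] using hcover c d hc hcd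
  push Not at hcover
  obtain ⟨c, d, hc, hcd, hcp, hdp⟩ := hcover
  obtain ⟨s, t, hs, hsp, rfl | rfl, hst⟩ :=
    hb.exists_attachment_ne hG hxy hbxy hp hpb hc hcd hcp hdp
  · exact hb.exists_isDominatingEar hbxy hs hr (.inl rfl) (.inr rfl) hst hry (.inl hsp)
  · exact hb.exists_isDominatingEar hbxy hp hs (.inl rfl) (.inr rfl) hpx hst (.inl hsp.symm)

theorem EssentiallyTwoEdgeConnected.exists_two_attachments (hG : EssentiallyTwoEdgeConnected G)
    (hxy : G.Adj x y) {a c x' : V} (hxx' : G.Adj x x') (hx'y : x' ≠ y)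
    (hac : (pairDeletion G x y).Adj a c) :
    ∃ s₁ t₁ s₂ t₂, (pairDeletion G x y).Reachable a s₁ ∧ (pairDeletion G x y).Reachable a s₂ ∧
      (t₁ = x ∨ t₁ = y) ∧ (t₂ = x ∨ t₂ = y) ∧ G.Adj s₁ t₁ ∧ G.Adj s₂ t₂ ∧
      (s₁ ≠ s₂ ∨ t₁ ≠ t₂) := by
  obtain ⟨hacG, haxy, hcxy⟩ := pairDeletion_adj.mp hac
  have hxa : ¬ (pairDeletion G x y).Reachable a x := fun h =>
    (ne_and_ne_of_reachable_pairDeletion h haxy).1 rfl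
  have exists_attachment {e : Sym2 V} {z : V} (he : e ∈ G.edgeSet) (hace : s(a, c) ≠ e)
      (hxz : G.Adj x z) (hxze : s(x, z) ≠ e) :
      ∃ s t, (pairDeletion G x y).Reachable a s ∧ (t = x ∨ t = y) ∧ G.Adj s t ∧ s(s, t) ≠ e := by
    obtain ⟨s, hs, t, ht, hst, hne⟩ := hG.exists_crossing_adj he
      {z | (pairDeletion G x y).Reachable a z} hacG hace .rfl hxz hxze hxa
    exact ⟨s, t, hs, eq_or_eq_of_not_reachable_pairDeletion haxy hs hst ht, hst, hne⟩
  obtain ⟨s₁, t₁, hs₁, ht₁, h₁, -⟩ := exists_attachment (e := s(x, y)) hxy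
    (by grind [Sym2.eq_iff]) hxx' (by grind [Sym2.eq_iff])
  have hs₁xy := ne_and_ne_of_reachable_pairDeletion hs₁ haxy
  obtain ⟨s₂, t₂, hs₂, ht₂, h₂, hne⟩ := exists_attachment (e := s(s₁, t₁)) h₁
    (by grind [Sym2.eq_iff]) hxy (by grind [Sym2.eq_iff])
  exact ⟨s₁, t₁, s₂, t₂, hs₁, hs₂, ht₁, ht₂, h₁, h₂, by grind⟩

theorem IsStarForest.exists_isDominatingEar (hH : IsStarForest (pairDeletion G x y))
    (hG : EssentiallyTwoEdgeConnected G) (hxy : G.Adj x y) {a c x' : V} (hxx' : G.Adj x x')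
    (hx'y : x' ≠ y) (hac : (pairDeletion G x y).Adj a c) :
    ∃ u v, ∃ l : G.Walk u v,
      IsDominatingEar G x y {(pairDeletion G x y).connectedComponentMk a} l := by
  obtain ⟨s₁, t₁, s₂, t₂, hs₁, hs₂, ht₁, ht₂, h₁, h₂, hne⟩ :=
    hG.exists_two_attachments hxy hxx' hx'y hac
  obtain ⟨b, hab, hb⟩ := hH.exists_isStarCenter a
  have hbxy := ne_and_ne_of_reachable_pairDeletion hab (pairDeletion_adj.mp hac).2.1
  rw [ConnectedComponent.eq.mpr hab]
  replace hs₁ := hab.symm.trans hs₁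
  replace hs₂ := hab.symm.trans hs₂
  by_cases hs : s₁ = s₂
  · have ht := hne.resolve_left (not_not_intro hs)
    obtain ⟨p, r, hp, hr, hpx, hry⟩ : ∃ p r, (pairDeletion G x y).Reachable b p ∧
        (pairDeletion G x y).Reachable b r ∧ G.Adj p x ∧ G.Adj r y := by
      rcases ht₁ with rfl | rfl <;> rcases ht₂ with rfl | rfl
      exacts [absurd rfl ht, ⟨s₁, s₂, hs₁, hs₂, h₁, h₂⟩, ⟨s₂, s₁, hs₂, hs₁, h₂, h₁⟩, absurd rfl ht]
    exact ⟨x, y, hb.exists_isDominatingEar_of_adj_of_adj hG hxy hbxy hp hr hpx hry⟩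
  · exact ⟨t₁, t₂, hb.exists_isDominatingEar hbxy hs₁ hs₂ ht₁ ht₂ h₁ h₂ (.inl hs)⟩

theorem EssentiallyTwoEdgeConnected.exists_adj_reachable_adj (hG : EssentiallyTwoEdgeConnected G)
    (hxy : G.Adj x y) {x' y' : V} (hxx' : G.Adj x x') (hx'y : x' ≠ y) (hyy' : G.Adj y y')
    (hy'x : y' ≠ x) :
    ∃ p r, (p ≠ x ∧ p ≠ y) ∧ (pairDeletion G x y).Reachable p r ∧ G.Adj p x ∧ G.Adj r y := by
  let S : Set V :=
    {z | z = x ∨ ∃ p, (p ≠ x ∧ p ≠ y) ∧ G.Adj p x ∧ (pairDeletion G x y).Reachable p z}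
  have hyS : y ∉ S := by
    rintro (h | ⟨p, hp, -, hpy⟩)
    · exact hxy.ne' h
    · exact (ne_and_ne_of_reachable_pairDeletion hpy hp).2 rfl
  obtain ⟨s, hs, t, ht, hst, hne⟩ := hG.exists_crossing_adj (e := s(x, y)) hxy S
    hxx' (by grind [Sym2.eq_iff]) (.inl rfl) hyy' (by grind [Sym2.eq_iff]) hyS
  rcases hs with rfl | ⟨p, hp, hpx, hps⟩
  · have hty : t ≠ y := fun h => hne (h ▸ rfl)
    exact absurd (.inr ⟨t, ⟨hst.ne', hty⟩, hst.symm, .rfl⟩) ht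
  · obtain rfl := (eq_or_eq_of_not_reachable_pairDeletion hp hps hst
      fun h => ht (.inr ⟨p, hp, hpx, h⟩)).resolve_left fun h => ht (.inl h)
    exact ⟨p, s, hp, hps, hpx, hst⟩

theorem IsStarForest.exists_hasSpanningEar (hH : IsStarForest (pairDeletion G x y))
    (hG : EssentiallyTwoEdgeConnected G) (hxy : G.Adj x y) {x' y' : V} (hxx' : G.Adj x x')
    (hx'y : x' ≠ y) (hyy' : G.Adj y y') (hy'x : y' ≠ x) :
    ∃ 𝒞, HasSpanningEar G x y 𝒞 := by
  obtain ⟨p, r, hpxy, hpr, hpx, hry⟩ := hG.exists_adj_reachable_adj hxy hxx' hx'y hyy' hy'x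
  obtain ⟨b, hpb, hb⟩ := hH.exists_isStarCenter p
  obtain ⟨l, hl⟩ := hb.exists_isDominatingEar_of_adj_of_adj hG hxy
    (ne_and_ne_of_reachable_pairDeletion hpb hpxy) hpb.symm (hpb.symm.trans hpr) hpx hry
  exact ⟨_, y, l, hl, l.end_mem_support⟩

theorem HasSpanningEar.union_of_finite {𝒞 𝒟 : Set (pairDeletion G x y).ConnectedComponent}
    (hC : HasSpanningEar G x y 𝒞) (hfin : 𝒟.Finite)
    (hD : ∀ D ∈ 𝒟, ∃ u v, ∃ l : G.Walk u v, IsDominatingEar G x y {D} l) :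
    HasSpanningEar G x y (𝒞 ∪ 𝒟) := by
  induction 𝒟, hfin using Set.Finite.induction_on with
  | empty => rwa [Set.union_empty]
  | @insert D 𝒟 _ _ ih =>
    have ih := ih fun D' hD' => hD D' (.inr hD')
    rw [Set.union_insert]
    by_cases hmem : D ∈ 𝒞 ∪ 𝒟
    · rwa [Set.insert_eq_of_mem hmem]
    · obtain ⟨u, v, l, hl⟩ := hD D (Set.mem_insert ..)
      rw [Set.insert_eq, Set.union_comm]
      exact ih.union hl (Set.disjoint_singleton_right.mpr hmem)

end Attachment

theorem stmt_14_general {V : Type*} {G : SimpleGraph V} (hG : EssentiallyTwoEdgeConnected G)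
    {x y : V} (hxy : G.Adj x y) (hx : (G.neighborSet x).Nontrivial)
    (hy : (G.neighborSet y).Nontrivial) (hH : IsStarForest (pairDeletion G x y))
    (hfin : ((pairDeletion G x y).connectedComponentMk '' (pairDeletion G x y).support).Finite) :
    ∃ (t0 : V) (t : G.Walk t0 t0), t.IsTrail ∧
      (∀ e ∈ G.edgeSet, ∃ z : V, z ∈ e ∧ z ∈ t.support) ∧
      x ∈ t.support ∧ y ∈ t.support := by
  obtain ⟨x', hxx', hx'y⟩ := hx.exists_ne y
  obtain ⟨y', hyy', hy'x⟩ := hy.exists_ne x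
  obtain ⟨𝒞, hC⟩ := hH.exists_hasSpanningEar hG hxy hxx' hx'y hyy' hy'x
  obtain ⟨t0, t, ht, hxt, hyt, hdom⟩ := (hC.union_of_finite hfin (by
    rintro _ ⟨a, ⟨c, hac⟩, rfl⟩
    exact hH.exists_isDominatingEar hG hxy hxx' hx'y hac)).exists_closed_trail hxy
  refine ⟨t0, t, ht, fun e he => ?_, hxt, hyt⟩
  by_cases hxe : x ∈ e
  · exact ⟨x, hxe, hxt⟩
  by_cases hye : y ∈ e
  · exact ⟨y, hye, hyt⟩
  have hHe : e ∈ (pairDeletion G x y).edgeSet := edgeSet_pairDeletion ▸ ⟨he, hxe, hye⟩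
  induction e with | _ a c
  rcases hdom a c hHe (.inr ⟨a, ⟨c, hHe⟩, rfl⟩) with h | h
  exacts [⟨a, Sym2.mem_mk_left .., h⟩, ⟨c, Sym2.mem_mk_right .., h⟩]

theorem stmt_14 {V : Type*} [Fintype V] (G : SimpleGraph V)
    (hconn : G.Connected)
    (hess : ∀ e ∈ G.edgeSet, ∀ a b c d : V,
      (G.deleteEdges {e}).Adj a b → (G.deleteEdges {e}).Adj c d →
      (G.deleteEdges {e}).Reachable a c)
    (x y : V) (hxy : G.Adj x y)
    (hdx : 2 ≤ (G.neighborSet x).ncard) (hdy : 2 ≤ (G.neighborSet y).ncard)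
    (hrem : {e ∈ G.edgeSet | x ∉ e ∧ y ∉ e}.ncard ≤ 2) :
    ∃ (t0 : V) (t : G.Walk t0 t0), t.IsTrail ∧
      (∀ e ∈ G.edgeSet, ∃ z : V, z ∈ e ∧ z ∈ t.support) ∧
      x ∈ t.support ∧ y ∈ t.support :=
  stmt_14_general hess hxy (Set.one_lt_ncard_iff_nontrivial.mp hdx)
    (Set.one_lt_ncard_iff_nontrivial.mp hdy)
    (isStarForest_of_ncard_edgeSet_le_two (Set.toFinite _) (edgeSet_pairDeletion ▸ hrem))
    (Set.toFinite _)
end
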